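/- arXiv:2401.03204 — 2 statements merged into one kernel-verified Lean document; each statement's English description precedes it below -/
import Mathlib

section
/- Part (1) of Lemma 5: 4·(3 + η₁ + 2η₂ + 3η₃)·(3 + η₃ + 2η₀ + 3η₁) ≡ −2(3+4y)·H + 5p + 9 (mod (4^p − 1)/3). -/
open Finset

/-- The cyclotomic class `D_i` of order 4 modulo `p` with respect to the
primitive root `θ`: `{θ^(i+4j) mod p : 0 ≤ j < (p-1)/4}`. -/
def cycD (p θ i : ℕ) : Finset ℕ :=
  (Finset.range ((p - 1) / 4)).image fun j => θ ^ (i + 4 * j) % p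

/-- `η_i = Σ_{t ∈ D_i} 4^t` as an integer. -/
def eta4 (p θ : ℕ) (i : ℕ) : ℤ := ∑ t ∈ cycD p θ i, (4 : ℤ) ^ t

/-- `H = η₀ + η₂ − η₁ − η₃`. -/
def Hval (p θ : ℕ) : ℤ := eta4 p θ 0 + eta4 p θ 2 - eta4 p θ 1 - eta4 p θ 3

/-!
Let `χ` be the quartic character modulo `p` with `χ θ = I`, and replace the base `4` in the sums
`η_i` by a primitive `p`-th root of unity `ζ`, so that they become Gaussian periods with
`η₀ + η₁ + η₂ + η₃ = -1`. Put `H = η₀ + η₂ - η₁ - η₃`, `u = η₀ - η₂` and `v = η₁ - η₃`. Twice the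
two factors are `3 - H ∓ 2 * (u + v)`, so the left-hand side is `(3 - H) ^ 2 - 4 * (u + v) ^ 2`.
Expanding the periods into Gauss sums gives `H ^ 2 = p`, `u ^ 2 + v ^ 2 = χ (-1) * p = -p` and
`2 * u * v = b * H`, where `a + b * I` is the Jacobi sum `J(χ, χ)`. Its norm is `p`, and the
cyclotomic number `(0,1)₄` determines `a + 2 * b`; since `p` is prime, this forces `b = 2 * y`.
The resulting identity says that an integer polynomial vanishes at `ζ`. Hence the `p`-th cyclotomic
polynomial divides it, and both may be evaluated at `4`, where the former is `(4 ^ p - 1) / 3`.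
-/

section CyclotomicClasses

variable {F K : Type*} [Field F] [Field K]

theorem sum_inv_pow_mul_mulChar_pow_apply [DecidableEq K] {n : ℕ} [NeZero n] {χ : MulChar F K}
    (hχ : χ ^ n = 1) {z : K} (hz : z ^ n = 1) (a : F) :
    ∑ k ∈ range n, z⁻¹ ^ k * (χ ^ k) a = if χ a = z then (n : K) else 0 := by
  have hz0 : z ≠ 0 := (IsUnit.of_pow_eq_one hz (NeZero.ne n)).ne_zero
  rcases eq_or_ne a 0 with rfl | ha
  · simp [MulChar.map_zero, hz0.symm]
  have hpow (k : ℕ) : (χ ^ k) a = χ a ^ k := MulChar.pow_apply_coe χ k (Units.mk0 a ha)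
  have hn : (z⁻¹ * χ a) ^ n = 1 := by
    rw [mul_pow, inv_pow, hz, ← hpow, hχ, MulChar.one_apply ha.isUnit, inv_one, one_mul]
  simp only [hpow, ← mul_pow]
  split_ifs with h
  · simp [h, inv_mul_cancel₀ hz0]
  · have h1 : z⁻¹ * χ a ≠ 1 := fun h' ↦ h (inv_mul_eq_one₀ hz0 |>.mp h').symm
    rw [geom_sum_eq h1, hn, sub_self, zero_div]

variable [Fintype F]

open scoped Classical in
/-- The cyclotomic class of a multiplicative character `χ` at `z`: the fibre of `χ` over `z`. If `χ`
sends a primitive root `θ` to a primitive `n`-th root of unity `ω`, the fibre over `ω ^ i` is the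
`i`-th cyclotomic class of order `n` with respect to `θ`. -/
noncomputable def cyclotomicClass (χ : MulChar F K) (z : K) : Finset F := {a | χ a = z}

open scoped Classical in
/-- The cyclotomic number of a multiplicative character: the number of pairs of consecutive elements
of `F` on which `χ` takes the values `z` and `w`. -/
noncomputable def cyclotomicNumber (χ : MulChar F K) (z w : K) : ℕ :=
  #{a ∈ cyclotomicClass χ z | a + 1 ∈ cyclotomicClass χ w}

/-- The Gaussian period of an additive character `ψ` over the cyclotomic class of `χ` at `z`. -/
noncomputable def gaussPeriod (χ : MulChar F K) (ψ : AddChar F K) (z : K) : K :=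
  ∑ a ∈ cyclotomicClass χ z, ψ a

theorem card_mul_gaussPeriod {n : ℕ} [NeZero n] {χ : MulChar F K} (hχ : χ ^ n = 1) {z : K}
    (hz : z ^ n = 1) (ψ : AddChar F K) :
    n * gaussPeriod χ ψ z = ∑ k ∈ range n, z⁻¹ ^ k * gaussSum (χ ^ k) ψ := by
  classical
  simp only [gaussPeriod, cyclotomicClass, gaussSum, sum_filter, mul_sum]
  rw [sum_comm]
  refine sum_congr rfl fun a _ ↦ ?_
  simp only [← mul_assoc, ← sum_mul, sum_inv_pow_mul_mulChar_pow_apply hχ hz]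
  split_ifs <;> simp

theorem sq_mul_cyclotomicNumber {n : ℕ} [NeZero n] {χ : MulChar F K} (hχ : χ ^ n = 1) {z w : K}
    (hz : z ^ n = 1) (hw : w ^ n = 1) :
    (n : K) ^ 2 * cyclotomicNumber χ z w =
      ∑ k ∈ range n, ∑ l ∈ range n,
        z⁻¹ ^ k * w⁻¹ ^ l * (χ ^ k) (-1) * jacobiSum (χ ^ k) (χ ^ l) := by
  classical
  calc (n : K) ^ 2 * cyclotomicNumber χ z w
    _ = ∑ a, (if χ a = z then (n : K) else 0) * (if χ (a + 1) = w then (n : K) else 0) := by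
      simp only [ite_zero_mul_ite_zero, ← sum_filter, sum_const, nsmul_eq_mul, cyclotomicNumber,
        cyclotomicClass, mem_filter, mem_univ, true_and, filter_filter]
      ring
    _ = ∑ a, (if χ (-a) = z then (n : K) else 0) * (if χ (1 - a) = w then (n : K) else 0) := by
      rw [← Equiv.sum_comp (Equiv.neg F)]
      simp only [Equiv.neg_apply, neg_add_eq_sub]
    _ = ∑ a, ∑ k ∈ range n, ∑ l ∈ range n,
          z⁻¹ ^ k * (χ ^ k) (-a) * (w⁻¹ ^ l * (χ ^ l) (1 - a)) := by
      simp only [← sum_mul_sum, sum_inv_pow_mul_mulChar_pow_apply hχ hz,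
        sum_inv_pow_mul_mulChar_pow_apply hχ hw]
    _ = _ := by
      rw [sum_comm]
      refine sum_congr rfl fun k _ ↦ ?_
      rw [sum_comm]
      refine sum_congr rfl fun l _ ↦ ?_
      rw [jacobiSum, mul_sum]
      refine sum_congr rfl fun a _ ↦ ?_
      rw [← neg_one_mul a, map_mul]
      ring

end CyclotomicClasses

section JacobiSums

variable {F : Type*} [Field F] [Fintype F]

theorem jacobiSum_eq_apply_neg_one_mul_jacobiSum_inv {R : Type*} [CommRing R]
    (χ φ : MulChar F R) : jacobiSum χ φ = χ (-1) * jacobiSum χ (χ * φ)⁻¹ := by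
  classical
  have hmem {a : F} : a ∈ (univ \ {0, 1} : Finset F) ↔ a ≠ 0 ∧ a - 1 ≠ 0 := by
    simp [sub_eq_zero]
  have hinvol {a : F} (ha : a - 1 ≠ 0) : a / (a - 1) - 1 = (a - 1)⁻¹ := by
    field_simp; ring
  rw [jacobiSum_eq_sum_sdiff, jacobiSum_eq_sum_sdiff, mul_sum]
  -- The substitution `a ↦ a / (a - 1)` is an involution of `F \ {0, 1}`.
  refine sum_nbij' (fun a ↦ a / (a - 1)) (fun a ↦ a / (a - 1)) ?_ ?_ ?_ ?_ ?_
  case refine_1 | refine_2 =>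
    intro a ha
    obtain ⟨ha₀, ha₁⟩ := hmem.1 ha
    exact hmem.2 ⟨div_ne_zero ha₀ ha₁, hinvol ha₁ ▸ inv_ne_zero ha₁⟩
  case refine_3 | refine_4 =>
    intro a ha
    obtain ⟨-, ha₁⟩ := hmem.1 ha
    simp only [hinvol ha₁, div_inv_eq_mul, div_mul_cancel₀ a ha₁]
  case refine_5 =>
    intro a ha
    obtain ⟨ha₀, ha₁⟩ := hmem.1 ha
    have hsub : 1 - a / (a - 1) = (1 - a)⁻¹ := by
      rw [← neg_sub (a / (a - 1)), hinvol ha₁, ← inv_neg, neg_sub]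
    have hprod : -1 * (a / (a - 1)) * (1 - a) = a := by field_simp; ring
    simp only [hsub, MulChar.inv_apply', inv_inv, MulChar.mul_apply]
    rw [← mul_assoc, ← mul_assoc, ← map_mul, ← map_mul, hprod]

theorem jacobiSum_inv_inv (χ φ : MulChar F ℂ) :
    jacobiSum χ⁻¹ φ⁻¹ = (starRingEnd ℂ) (jacobiSum χ φ) := by
  rw [← jacobiSum_ringHomComp, ← MulChar.star_eq_inv χ, ← MulChar.star_eq_inv φ]
  rfl

theorem normSq_jacobiSum {χ φ : MulChar F ℂ} (hχ : χ ≠ 1) (hφ : φ ≠ 1) (hχφ : χ * φ ≠ 1) :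
    Complex.normSq (jacobiSum χ φ) = Fintype.card F := by
  have hchar : ringChar ℂ ≠ ringChar F := by
    rw [ringChar.eq_zero]
    exact (CharP.ringChar_ne_zero_of_finite F).symm
  have h := jacobiSum_mul_jacobiSum_inv hchar hχ hφ hχφ
  rw [jacobiSum_inv_inv, Complex.mul_conj] at h
  exact_mod_cast h

theorem exists_gaussianInt_jacobiSum_eq {χ φ : MulChar F ℂ} (hχ : χ ^ 4 = 1) (hφ : φ ^ 4 = 1) :
    ∃ π : GaussianInt, (π : ℂ) = jacobiSum χ φ := by
  have hle : Algebra.adjoin ℤ {Complex.I} ≤ GaussianInt.toComplex.toIntAlgHom.range :=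
    Algebra.adjoin_le (Set.singleton_subset_iff.2 ⟨⟨0, 1⟩, by simp [GaussianInt.toComplex_def]⟩)
  exact hle (jacobiSum_mem_algebraAdjoin_of_pow_eq_one hχ hφ Complex.isPrimitiveRoot_I)

end JacobiSums

theorem eq_two_mul_of_prime_eq_sq_add_sq {p x y a b : ℤ} (hp : Prime p)
    (hxy : p = x ^ 2 + 4 * y ^ 2) (hab : p = a ^ 2 + b ^ 2)
    (hlin : x - 4 * y = -a - 2 * b) : b = 2 * y := by
  by_contra hne
  have hlin' : 5 * (2 * y - b) = 4 * a - 2 * b := by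
    refine mul_left_cancel₀ (sub_ne_zero.2 fun h ↦ hne h.symm) ?_
    linear_combination hab - hxy - (x + 4 * y - a - 2 * b) * hlin
  obtain ⟨f, hf⟩ : ∃ f, 2 * y - b = 4 * f := ⟨(2 * y - b) / 4, by lia⟩
  have hb : b = 2 * a - 10 * f := by linarith
  have hfactor : p = 5 * ((a - 4 * f) ^ 2 + (2 * f) ^ 2) := by rw [hab, hb]; ring
  have hunit : IsUnit ((a - 4 * f) ^ 2 + (2 * f) ^ 2) :=
    (hp.irreducible.isUnit_or_isUnit hfactor).resolve_left (by decide)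
  have hone : (a - 4 * f) ^ 2 + (2 * f) ^ 2 = 1 := by
    rcases Int.isUnit_iff.1 hunit with h | h
    · exact h
    · nlinarith [sq_nonneg (a - 4 * f), sq_nonneg (2 * f)]
  have hf0 : f = 0 := by nlinarith
  exact hne (by linarith)

section QuarticCharacters

open Complex

variable {F : Type*} [Field F] [Fintype F] {χ : MulChar F ℂ}

theorem jacobiSum_self_of_pow_four_eq_one (hχ : χ ^ 4 = 1) :
    jacobiSum χ χ = χ (-1) * jacobiSum χ (χ ^ 2) := by
  rw [jacobiSum_eq_apply_neg_one_mul_jacobiSum_inv, ← sq,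
    inv_eq_of_mul_eq_one_left (by rw [← pow_add, hχ])]

theorem sixteen_mul_cyclotomicNumber_one_I (hχ : orderOf χ = 4) (hneg : χ (-1) = -1) :
    16 * (cyclotomicNumber χ 1 I : ℝ) =
      Fintype.card F + 1 - 2 * (jacobiSum χ χ).re - 4 * (jacobiSum χ χ).im := by
  have hχ4 : χ ^ 4 = 1 := hχ ▸ pow_orderOf_eq_one χ
  have hne {k : ℕ} (h0 : k ≠ 0) (hk : k < 4) : χ ^ k ≠ 1 := pow_ne_one_of_lt_orderOf h0 (hχ ▸ hk)
  have hχ1 : χ ≠ 1 := by simpa using hne one_ne_zero (by norm_num)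
  have hχ2 : χ ^ 2 ≠ 1 := hne two_ne_zero (by norm_num)
  have hχ3 : χ ^ 3 ≠ 1 := hne three_ne_zero (by norm_num)
  have inv1 : χ⁻¹ = χ ^ 3 := inv_eq_of_mul_eq_one_left (by rw [← pow_succ, hχ4])
  have inv2 : (χ ^ 2)⁻¹ = χ ^ 2 := inv_eq_of_mul_eq_one_left (by rw [← pow_add, hχ4])
  have hneg' (k : ℕ) : (χ ^ k) (-1) = (-1) ^ k := by
    simpa [hneg] using MulChar.pow_apply_coe χ k (-1)
  set J := jacobiSum χ χ with hJ
  have j12 : jacobiSum χ (χ ^ 2) = -J := by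
    rw [hJ, jacobiSum_self_of_pow_four_eq_one hχ4, hneg, neg_one_mul, neg_neg]
  have j13 : jacobiSum χ (χ ^ 3) = 1 := by
    rw [← inv1, jacobiSum_nontrivial_inv hχ1, hneg, neg_neg]
  have j22 : jacobiSum (χ ^ 2) (χ ^ 2) = -1 := by
    simpa [inv2, hneg'] using jacobiSum_nontrivial_inv hχ2
  have j23 : jacobiSum (χ ^ 2) (χ ^ 3) = -(starRingEnd ℂ) J := by
    rw [← inv1, ← inv2, jacobiSum_comm, jacobiSum_inv_inv, j12, map_neg]
  have j33 : jacobiSum (χ ^ 3) (χ ^ 3) = (starRingEnd ℂ) J := by rw [← inv1, jacobiSum_inv_inv]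
  have hcount := sq_mul_cyclotomicNumber hχ4 (one_pow 4) I_pow_four
  simp only [sum_range_succ, sum_range_zero, hneg', pow_zero, pow_one, jacobiSum_one_one,
    jacobiSum_one_nontrivial hχ1, jacobiSum_one_nontrivial hχ2, jacobiSum_one_nontrivial hχ3,
    jacobiSum_comm _ (1 : MulChar F ℂ), jacobiSum_comm (χ ^ _) χ, jacobiSum_comm (χ ^ 3) (χ ^ 2),
    ← hJ, j12, j13, j22, j23, j33, inv_I, inv_one, neg_sq, I_sq, neg_pow I 3, I_pow_three] at hcount
  have hconj : (starRingEnd ℂ) J = 2 * J.re - J := by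
    rw [eq_sub_iff_add_eq', add_conj]; push_cast; ring
  have hcount' : (16 * cyclotomicNumber χ 1 I : ℂ) = Fintype.card F + 1 - 2 * J.re - 4 * J.im := by
    rw [hconj] at hcount
    linear_combination hcount - 4 * I * re_add_im J + 4 * J.im * I_mul_I
  exact_mod_cast hcount'

/-- The Gaussian periods of order 4. If a quartic character `χ` takes the value `I` at a primitive
root `θ`, then `quarticPeriod χ ψ i` is the sum of `ψ` over the `i`-th cyclotomic class of order 4
with respect to `θ`. -/
noncomputable def quarticPeriod (χ : MulChar F ℂ) (ψ : AddChar F ℂ) (i : ℕ) : ℂ :=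
  gaussPeriod χ ψ (I ^ i)

variable {ψ : AddChar F ℂ}

local notation "η" => quarticPeriod χ ψ

theorem four_mul_quarticPeriod (hχ : χ ^ 4 = 1) (i : ℕ) :
    4 * η i = gaussSum 1 ψ + (-I) ^ i * gaussSum χ ψ +
      (-1) ^ i * gaussSum (χ ^ 2) ψ + I ^ i * gaussSum (χ ^ 3) ψ := by
  have hI : (I ^ i) ^ 4 = 1 := by rw [pow_right_comm, I_pow_four, one_pow]
  have hinv (k : ℕ) : (I ^ i)⁻¹ ^ k = ((-I) ^ k) ^ i := by rw [← inv_pow, inv_I, pow_right_comm]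
  have h2 : (-I) ^ 2 = -1 := by rw [neg_sq, I_sq]
  have h3 : (-I) ^ 3 = I := by rw [pow_succ, h2, neg_one_mul, neg_neg]
  simpa only [sum_range_succ, sum_range_zero, hinv, h2, h3, pow_zero, pow_one, one_pow, one_mul,
    zero_add, Nat.cast_ofNat, quarticPeriod] using card_mul_gaussPeriod hχ hI ψ

theorem quarticPeriod_zero_sub_two (hχ : χ ^ 4 = 1) :
    2 * (η 0 - η 2) = gaussSum χ ψ + gaussSum (χ ^ 3) ψ := by
  have h := four_mul_quarticPeriod (ψ := ψ) hχ
  linear_combination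
    (h 0 - h 2) / 2 - (gaussSum χ ψ + gaussSum (χ ^ 3) ψ) / 2 * I_sq

theorem quarticPeriod_one_sub_three (hχ : χ ^ 4 = 1) :
    2 * (η 1 - η 3) = -I * (gaussSum χ ψ - gaussSum (χ ^ 3) ψ) := by
  have h := four_mul_quarticPeriod (ψ := ψ) hχ
  linear_combination
    (h 1 - h 3) / 2 + (gaussSum χ ψ - gaussSum (χ ^ 3) ψ) * I / 2 * I_sq

theorem quarticPeriod_alternating_sum (hχ : χ ^ 4 = 1) :
    η 0 + η 2 - η 1 - η 3 = gaussSum (χ ^ 2) ψ := by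
  have h := four_mul_quarticPeriod (ψ := ψ) hχ
  linear_combination (h 0 + h 2 - h 1 - h 3) / 4 +
    ((1 + I) * gaussSum χ ψ + (1 - I) * gaussSum (χ ^ 3) ψ) / 4 * I_sq

theorem quarticPeriod_sum (hχ : χ ^ 4 = 1) (hψ : ψ ≠ 1) :
    η 0 + η 1 + η 2 + η 3 = -1 := by
  have h := four_mul_quarticPeriod (ψ := ψ) hχ
  rw [← gaussSum_one_left hψ]
  linear_combination (h 0 + h 1 + h 2 + h 3) / 4 +
    ((1 - I) * gaussSum χ ψ + (1 + I) * gaussSum (χ ^ 3) ψ) / 4 * I_sq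

theorem quarticPeriod_alternating_sum_sq (hχ : orderOf χ = 4) (hψ : ψ ≠ 1) :
    (η 0 + η 2 - η 1 - η 3) ^ 2 = Fintype.card F := by
  have hχ4 : χ ^ 4 = 1 := hχ ▸ pow_orderOf_eq_one χ
  have hχ2 : χ ^ 2 ≠ 1 := pow_ne_one_of_lt_orderOf two_ne_zero (by lia)
  have hquad : (χ ^ 2).IsQuadratic :=
    MulChar.isQuadratic_iff_sq_eq_one.2 (by rw [← pow_mul, hχ4])
  have hneg : (χ ^ 2) (-1) = 1 := by
    rw [sq, MulChar.mul_apply, ← map_mul, neg_one_mul, neg_neg, map_one]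
  rw [quarticPeriod_alternating_sum hχ4, gaussSum_sq hχ2 hquad (AddChar.IsPrimitive.of_ne_one hψ),
    hneg, one_mul]

theorem quarticPeriod_sub_sq_add_sub_sq (hχ : orderOf χ = 4) (hψ : ψ ≠ 1) :
    (η 0 - η 2) ^ 2 + (η 1 - η 3) ^ 2 = χ (-1) * Fintype.card F := by
  have hχ4 : χ ^ 4 = 1 := hχ ▸ pow_orderOf_eq_one χ
  have hχ1 : χ ≠ 1 := by simpa using pow_ne_one_of_lt_orderOf (x := χ) one_ne_zero (by lia)
  have hmul := gaussSum_mul_gaussSum_pow_orderOf_sub_one hχ1 (AddChar.IsPrimitive.of_ne_one hψ)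
  rw [hχ] at hmul
  have h02 := quarticPeriod_zero_sub_two (ψ := ψ) hχ4
  have h13 := quarticPeriod_one_sub_three (ψ := ψ) hχ4
  linear_combination hmul +
    (2 * (η 0 - η 2) + gaussSum χ ψ + gaussSum (χ ^ 3) ψ) / 4 * h02 +
    (2 * (η 1 - η 3) - I * (gaussSum χ ψ - gaussSum (χ ^ 3) ψ)) / 4 *
      h13 + (gaussSum χ ψ - gaussSum (χ ^ 3) ψ) ^ 2 / 4 * I_sq

theorem two_mul_quarticPeriod_sub_mul_sub (hχ : orderOf χ = 4) :
    2 * (η 0 - η 2) * (η 1 - η 3) = (jacobiSum χ χ).im * (η 0 + η 2 - η 1 - η 3) := by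
  have hχ4 : χ ^ 4 = 1 := hχ ▸ pow_orderOf_eq_one χ
  have hχ2 : χ ^ 2 ≠ 1 := pow_ne_one_of_lt_orderOf two_ne_zero (by lia)
  have hinv : χ ^ 3 = χ⁻¹ := eq_inv_of_mul_eq_one_left (by rw [← pow_succ, hχ4])
  have hinv_sq : χ⁻¹ * χ⁻¹ = χ ^ 2 := by
    rw [← sq, inv_pow, inv_eq_of_mul_eq_one_left (by rw [← pow_add, hχ4])]
  have h1 : gaussSum (χ ^ 2) ψ * jacobiSum χ χ = gaussSum χ ψ ^ 2 := by
    rw [sq χ, jacobiSum_mul_nontrivial (sq χ ▸ hχ2), sq]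
  have h3 : gaussSum (χ ^ 2) ψ * (starRingEnd ℂ) (jacobiSum χ χ) = gaussSum (χ ^ 3) ψ ^ 2 := by
    rw [← jacobiSum_inv_inv, hinv, ← hinv_sq, jacobiSum_mul_nontrivial (hinv_sq ▸ hχ2), sq]
  have hprod := congr_arg₂ (· * ·) (quarticPeriod_zero_sub_two (ψ := ψ) hχ4)
    (quarticPeriod_one_sub_three (ψ := ψ) hχ4)
  have him := sub_conj (jacobiSum χ χ)
  push_cast at him
  rw [quarticPeriod_alternating_sum hχ4]
  linear_combination hprod / 2 + I / 2 * (h1 - h3) - I / 2 * gaussSum (χ ^ 2) ψ * him -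
    (jacobiSum χ χ).im * gaussSum (χ ^ 2) ψ * I_sq

theorem quarticPeriod_product_formula (hχ : orderOf χ = 4) (hneg : χ (-1) = -1) (hψ : ψ ≠ 1) :
    4 * (3 + η 1 + 2 * η 2 + 3 * η 3) * (3 + η 3 + 2 * η 0 + 3 * η 1) =
      -2 * (3 + 2 * (jacobiSum χ χ).im) * (η 0 + η 2 - η 1 - η 3) + 5 * Fintype.card F + 9 := by
  have hsum := quarticPeriod_sum (hχ ▸ pow_orderOf_eq_one χ) hψ
  have hH := quarticPeriod_alternating_sum_sq hχ hψ
  have hnorm := quarticPeriod_sub_sq_add_sub_sq hχ hψ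
  have hprod := two_mul_quarticPeriod_sub_mul_sub (ψ := ψ) hχ
  rw [hneg] at hnorm
  have hleft : 2 * (3 + η 1 + 2 * η 2 + 3 * η 3) =
      3 - (η 0 + η 2 - η 1 - η 3) - 2 * ((η 0 - η 2) + (η 1 - η 3)) := by
    linear_combination 3 * hsum
  have hright : 2 * (3 + η 3 + 2 * η 0 + 3 * η 1) =
      3 - (η 0 + η 2 - η 1 - η 3) + 2 * ((η 0 - η 2) + (η 1 - η 3)) := by
    linear_combination 3 * hsum
  have hfactors := congr_arg₂ (· * ·) hleft hright
  linear_combination hfactors + hH - 4 * hnorm - 4 * hprod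

theorem im_jacobiSum_self_eq_two_mul (hχ : orderOf χ = 4) (hneg : χ (-1) = -1)
    (hF : (Fintype.card F).Prime) {x y : ℤ} (hxy : (Fintype.card F : ℤ) = x ^ 2 + 4 * y ^ 2)
    (hcyc : 16 * (cyclotomicNumber χ 1 I : ℤ) = Fintype.card F + 1 + 2 * x - 8 * y) :
    (jacobiSum χ χ).im = 2 * y := by
  have hχ1 : χ ≠ 1 := by simpa using pow_ne_one_of_lt_orderOf (x := χ) one_ne_zero (by lia)
  have hχ2 : χ * χ ≠ 1 := sq χ ▸ pow_ne_one_of_lt_orderOf two_ne_zero (by lia)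
  have hχ4 : χ ^ 4 = 1 := hχ ▸ pow_orderOf_eq_one χ
  obtain ⟨π, hπ⟩ := exists_gaussianInt_jacobiSum_eq hχ4 hχ4
  have hre : (jacobiSum χ χ).re = π.re := by rw [← hπ, GaussianInt.intCast_re]
  have him : (jacobiSum χ χ).im = π.im := by rw [← hπ, GaussianInt.intCast_im]
  have hnorm : (Fintype.card F : ℤ) = π.re ^ 2 + π.im ^ 2 := by
    have h := normSq_jacobiSum hχ1 hχ1 hχ2
    rw [normSq_apply, hre, him, ← sq, ← sq] at h
    exact_mod_cast h.symm
  have hcyc' : 16 * (cyclotomicNumber χ 1 I : ℤ) = Fintype.card F + 1 - 2 * π.re - 4 * π.im := by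
    have h := sixteen_mul_cyclotomicNumber_one_I hχ hneg
    rw [hre, him] at h
    exact_mod_cast h
  rw [him]
  exact_mod_cast eq_two_mul_of_prime_eq_sq_add_sq (Nat.prime_iff_prime_int.1 hF) hxy hnorm
    (by linarith)

end QuarticCharacters

section PrimitiveRoots

variable {F K : Type*} [Field F] [Fintype F] [Field K] {θ : F} {n : ℕ}

theorem exists_pow_eq_of_isPrimitiveRoot (hθ : IsPrimitiveRoot θ (Fintype.card F - 1)) {a : F}
    (ha : a ≠ 0) : ∃ k < Fintype.card F - 1, θ ^ k = a :=
  have : NeZero (Fintype.card F - 1) := ⟨Nat.sub_ne_zero_of_lt Fintype.one_lt_card⟩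
  hθ.eq_pow_of_pow_eq_one (FiniteField.pow_card_sub_one_eq_one a ha)

theorem exists_mulChar_apply_eq (hθ : IsPrimitiveRoot θ (Fintype.card F - 1)) {ω : K}
    (hω : ω ^ (Fintype.card F - 1) = 1) : ∃ χ : MulChar F K, χ θ = ω := by
  classical
  have hpred : Fintype.card F - 1 ≠ 0 := Nat.sub_ne_zero_of_lt Fintype.one_lt_card
  obtain ⟨g, rfl⟩ := hθ.isUnit hpred
  obtain ⟨ζ, rfl⟩ := IsUnit.of_pow_eq_one hω hpred
  have hg (x : Fˣ) : x ∈ Subgroup.zpowers g := by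
    obtain ⟨k, -, hk⟩ := exists_pow_eq_of_isPrimitiveRoot hθ x.ne_zero
    exact Subgroup.mem_zpowers_iff.2 ⟨k, Units.ext (by simpa using hk)⟩
  have hζ : ζ ∈ rootsOfUnity (Fintype.card Fˣ) K := by
    rw [_root_.mem_rootsOfUnity', Fintype.card_units, hω]
  exact ⟨MulChar.ofRootOfUnity hζ hg, MulChar.ofRootOfUnity_spec hζ hg⟩

theorem orderOf_mulChar_eq_of_isPrimitiveRoot (hθ : IsPrimitiveRoot θ (Fintype.card F - 1))
    {χ : MulChar F K} (hχ : IsPrimitiveRoot (χ θ) n) : orderOf χ = n := by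
  have hθ0 : IsUnit θ := hθ.isUnit (Nat.sub_ne_zero_of_lt Fintype.one_lt_card)
  have hpow (φ : MulChar F K) : φ = 1 ↔ φ θ = 1 := by
    refine ⟨fun h ↦ by rw [h, MulChar.one_apply hθ0], fun h ↦ MulChar.ext fun a ↦ ?_⟩
    obtain ⟨k, -, hk⟩ := exists_pow_eq_of_isPrimitiveRoot hθ a.ne_zero
    rw [← hk, map_pow, h, one_pow, hk, MulChar.one_apply_coe]
  rw [hχ.eq_orderOf, orderOf_eq_orderOf_iff]
  intro m
  rw [hpow, show (χ ^ m) θ = χ θ ^ m from MulChar.pow_apply_coe χ m hθ0.unit]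

theorem mulChar_neg_one_eq_pow (hθ : IsPrimitiveRoot θ (Fintype.card F - 1))
    (hn : Fintype.card F - 1 = 2 * n) (χ : MulChar F K) : χ (-1) = χ θ ^ n := by
  have hpos : 0 < Fintype.card F - 1 := Nat.sub_pos_of_lt Fintype.one_lt_card
  have hθn : θ ^ n = -1 := (hθ.pow hpos (hn.trans (mul_comm 2 n))).eq_neg_one_of_two_right
  rw [← hθn, map_pow]

theorem cyclotomicClass_pow_eq_image [DecidableEq F]
    (hθ : IsPrimitiveRoot θ (Fintype.card F - 1)) (hn : n ∣ Fintype.card F - 1)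
    {χ : MulChar F K} (hχ : IsPrimitiveRoot (χ θ) n) {i : ℕ} (hi : i < n) :
    cyclotomicClass χ (χ θ ^ i) =
      (range ((Fintype.card F - 1) / n)).image fun j ↦ θ ^ (i + n * j) := by
  ext a
  simp only [cyclotomicClass, mem_filter, mem_univ, true_and, mem_image, mem_range]
  constructor
  · intro ha
    have ha0 : a ≠ 0 := by
      rintro rfl
      rw [MulChar.map_zero] at ha
      exact pow_ne_zero i (hχ.ne_zero (by lia)) ha.symm
    obtain ⟨k, hk, rfl⟩ := exists_pow_eq_of_isPrimitiveRoot hθ ha0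
    have hki : k % n = i := by
      refine hχ.pow_inj (Nat.mod_lt k (by lia)) hi ?_
      rw [← ha, map_pow, hχ.eq_orderOf, pow_mod_orderOf]
    exact ⟨k / n, Nat.div_lt_div_of_lt_of_dvd hn hk, by rw [← hki, Nat.mod_add_div]⟩
  · rintro ⟨j, -, rfl⟩
    rw [map_pow, pow_add, pow_mul, hχ.pow_eq_one, one_pow, mul_one]

end PrimitiveRoots

section CyclotomicIntegers

open Polynomial in
theorem geom_sum_dvd_aeval_of_aeval_eq_zero {p : ℕ} (hp : p.Prime) {ζ : ℂ}
    (hζ : IsPrimitiveRoot ζ p) {P : ℤ[X]} (hP : aeval ζ P = 0) {R : Type*} [CommRing R] (r : R) :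
    ∑ i ∈ range p, r ^ i ∣ aeval r P := by
  have := Fact.mk hp
  have hdvd : cyclotomic p ℤ ∣ P := by
    rw [cyclotomic_eq_minpoly hζ hp.pos]
    exact minpoly.isIntegrallyClosed_dvd (hζ.isIntegral hp.pos) hP
  simpa [cyclotomic_prime] using map_dvd (aeval r) hdvd

/-- The sum of the powers `r ^ t` over the elements `t` of the cyclotomic class `D_i`, in an
arbitrary ring: it is a Gaussian period for `r` a `p`-th root of unity, and `eta4` for `r = 4`. -/
def etaAt (p θ : ℕ) {R : Type*} [CommRing R] (r : R) (i : ℕ) : R := ∑ t ∈ cycD p θ i, r ^ t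

theorem map_etaAt (p θ : ℕ) {R S F : Type*} [CommRing R] [CommRing S] [FunLike F R S]
    [RingHomClass F R S] (f : F) (r : R) (i : ℕ) : f (etaAt p θ r i) = etaAt p θ (f r) i := by
  simp only [etaAt, map_sum, map_pow]

end CyclotomicIntegers

section ClassesModP

open Complex

variable {p θ : ℕ} [Fact p.Prime]

theorem cycD_eq_image_cyclotomicClass (hp : 4 ∣ p - 1) (hθ : IsPrimitiveRoot (θ : ZMod p) (p - 1))
    {χ : MulChar (ZMod p) ℂ} (hχ : χ θ = I) {i : ℕ} (hi : i < 4) :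
    cycD p θ i = (cyclotomicClass χ (I ^ i)).image ZMod.val := by
  have hclass := cyclotomicClass_pow_eq_image (χ := χ) (n := 4) (by rwa [ZMod.card])
    (by rwa [ZMod.card]) (hχ ▸ isPrimitiveRoot_I) hi
  rw [← hχ, hclass, ZMod.card, image_image, cycD]
  simp only [Function.comp_def, ← Nat.cast_pow, ZMod.val_natCast]

theorem card_filter_cycD_eq_cyclotomicNumber (hp : 4 ∣ p - 1)
    (hθ : IsPrimitiveRoot (θ : ZMod p) (p - 1)) {χ : MulChar (ZMod p) ℂ} (hχ : χ θ = I) :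
    #{a ∈ cycD p θ 0 | (a + 1) % p ∈ cycD p θ 1} = cyclotomicNumber χ 1 I := by
  classical
  have hval (a : ZMod p) : (a.val + 1) % p = (a + 1).val := by
    rw [ZMod.val_add, ZMod.val_one_eq_one_mod, Nat.add_mod_mod]
  simp only [cycD_eq_image_cyclotomicClass hp hθ hχ (show 0 < 4 by norm_num),
    cycD_eq_image_cyclotomicClass hp hθ hχ (show 1 < 4 by norm_num), filter_image, hval,
    (ZMod.val_injective p).mem_finset_image, card_image_of_injective _ (ZMod.val_injective p),
    pow_zero, pow_one, cyclotomicNumber]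
  congr!

theorem etaAt_eq_quarticPeriod (hp : 4 ∣ p - 1) (hθ : IsPrimitiveRoot (θ : ZMod p) (p - 1))
    {χ : MulChar (ZMod p) ℂ} (hχ : χ θ = I) {ζ : ℂ} (hζ : ζ ^ p = 1) {i : ℕ} (hi : i < 4) :
    etaAt p θ ζ i = quarticPeriod χ (AddChar.zmodChar p hζ) i := by
  rw [etaAt, cycD_eq_image_cyclotomicClass hp hθ hχ hi,
    sum_image (ZMod.val_injective p).injOn]
  rfl

theorem etaAt_product_formula (hp8 : p % 8 = 5) {x y : ℤ} (hxy : (p : ℤ) = x ^ 2 + 4 * y ^ 2)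
    (hθ : IsPrimitiveRoot (θ : ZMod p) (p - 1))
    (hy : 16 * (#{a ∈ cycD p θ 0 | (a + 1) % p ∈ cycD p θ 1} : ℤ) = p + 1 + 2 * x - 8 * y)
    {ζ : ℂ} (hζ : IsPrimitiveRoot ζ p) :
    4 * (3 + etaAt p θ ζ 1 + 2 * etaAt p θ ζ 2 + 3 * etaAt p θ ζ 3) *
        (3 + etaAt p θ ζ 3 + 2 * etaAt p θ ζ 0 + 3 * etaAt p θ ζ 1) =
      -2 * (3 + 4 * y) * (etaAt p θ ζ 0 + etaAt p θ ζ 2 - etaAt p θ ζ 1 - etaAt p θ ζ 3) +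
        5 * p + 9 := by
  have hp4 : 4 ∣ p - 1 := by lia
  have hθ' : IsPrimitiveRoot (θ : ZMod p) (Fintype.card (ZMod p) - 1) := by rwa [ZMod.card]
  obtain ⟨χ, hχ⟩ : ∃ χ : MulChar (ZMod p) ℂ, χ θ = I := exists_mulChar_apply_eq hθ' (by
    rwa [ZMod.card, isPrimitiveRoot_I.pow_eq_one_iff_dvd])
  have hord : orderOf χ = 4 :=
    orderOf_mulChar_eq_of_isPrimitiveRoot hθ' (hχ ▸ isPrimitiveRoot_I)
  have hneg : χ (-1) = -1 := by
    rw [mulChar_neg_one_eq_pow hθ' (n := (p - 1) / 2) (by rw [ZMod.card]; lia), hχ,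
      I_pow_eq_pow_mod, show (p - 1) / 2 % 4 = 2 by lia, I_sq]
  have hψ : AddChar.zmodChar p hζ.pow_eq_one ≠ 1 := by
    rw [AddChar.zmod_char_ne_one_iff, ← Nat.cast_one, AddChar.zmodChar_apply', pow_one]
    exact hζ.ne_one (Fact.out : p.Prime).one_lt
  have him : (jacobiSum χ χ).im = 2 * y := by
    rw [card_filter_cycD_eq_cyclotomicNumber hp4 hθ hχ] at hy
    exact im_jacobiSum_self_eq_two_mul hord hneg (by rw [ZMod.card]; exact Fact.out)
      (by rwa [ZMod.card]) (by rwa [ZMod.card])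
  have hη {i : ℕ} (hi : i < 4) := etaAt_eq_quarticPeriod hp4 hθ hχ hζ.pow_eq_one hi
  rw [hη zero_lt_four, hη (show 1 < 4 by lia), hη (show 2 < 4 by lia), hη (show 3 < 4 by lia),
    quarticPeriod_product_formula hord hneg hψ, him, ZMod.card]
  push_cast
  ring

end ClassesModP

theorem lemma5_part1_general {p : ℕ} (hp : p.Prime) (hp8 : p % 8 = 5) {x y : ℤ}
    (hxy : (p : ℤ) = x ^ 2 + 4 * y ^ 2) {θ : ℕ} (hθ : IsPrimitiveRoot (θ : ZMod p) (p - 1))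
    (hy : 16 * (#{a ∈ cycD p θ 0 | (a + 1) % p ∈ cycD p θ 1} : ℤ) = p + 1 + 2 * x - 8 * y)
    {R : Type*} [CommRing R] (r : R) :
    ∑ i ∈ range p, r ^ i ∣
      -2 * (3 + 4 * y) * (etaAt p θ r 0 + etaAt p θ r 2 - etaAt p θ r 1 - etaAt p θ r 3) +
        5 * p + 9 - 4 * (3 + etaAt p θ r 1 + 2 * etaAt p θ r 2 + 3 * etaAt p θ r 3) *
        (3 + etaAt p θ r 3 + 2 * etaAt p θ r 0 + 3 * etaAt p θ r 1) := by
  have := Fact.mk hp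
  have hζ := Complex.isPrimitiveRoot_exp p hp.ne_zero
  let η := etaAt p θ (Polynomial.X : Polynomial ℤ)
  let P : Polynomial ℤ := -2 * (3 + 4 * Polynomial.C y) * (η 0 + η 2 - η 1 - η 3) + 5 * p + 9 -
    4 * (3 + η 1 + 2 * η 2 + 3 * η 3) * (3 + η 3 + 2 * η 0 + 3 * η 1)
  have hP : Polynomial.aeval (Complex.exp (2 * Real.pi * Complex.I / p)) P = 0 := by
    simp [P, η, map_etaAt, map_ofNat, etaAt_product_formula hp8 hxy hθ hy hζ]
  simpa [P, η, map_etaAt, map_ofNat] using geom_sum_dvd_aeval_of_aeval_eq_zero hp hζ hP r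

theorem lemma5_part1
    (p : ℕ) (hp : p.Prime) (hp8 : p % 8 = 5)
    (x y : ℤ) (hx : x % 4 = 1) (hxy : (p : ℤ) = x ^ 2 + 4 * y ^ 2)
    (θ : ℕ) (hθ : IsPrimitiveRoot (θ : ZMod p) (p - 1))
    (hy : 16 * (((cycD p θ 0).filter (fun a => (a + 1) % p ∈ cycD p θ 1)).card : ℤ)
        = (p : ℤ) + 1 + 2 * x - 8 * y)
    :
    4 * (3 + eta4 p θ 1 + 2 * eta4 p θ 2 + 3 * eta4 p θ 3) * (3 + eta4 p θ 3 + 2 * eta4 p θ 0 + 3 * eta4 p θ 1)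
      ≡ -2 * (3 + 4 * y) * Hval p θ + 5 * (p : ℤ) + 9 [ZMOD ((4 : ℤ) ^ p - 1) / 3] := by
  rw [Int.modEq_iff_dvd, show ((4 : ℤ) ^ p - 1) / 3 = ∑ i ∈ range p, 4 ^ i by
    rw [← geom_sum_mul, show (4 : ℤ) - 1 = 3 by norm_num, Int.mul_ediv_cancel _ three_ne_zero]]
  exact lemma5_part1_general hp hp8 hxy hθ hy 4
end

section
/- Part (5) of Lemma 5: 4·(η₃ + 2η₂ + 3η₁)·(η₁ + 2η₀ + 3η₃) ≡ 2(3+4y)·H + 5p + 9 (mod (4^p − 1)/3). -/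
open Finset

/-!
At a complex primitive `p`-th root of unity, the four Gaussian periods are linear combinations of
`-1` and the Gauss sums of `χ`, `χ ^ 2`, `χ⁻¹`, where `χ` is a character of order `4` with
`χ (-1) = -1`. Put `μ = χ θ`, so `μ ^ 2 = -1`. Then `H` is the quadratic Gauss sum, whose square
is `p`, and the two factors of the product are `-(3 + H + U) / 2` and `-(3 + H - U) / 2` with
`U = (1 + μ) * gaussSum χ ψ + (1 - μ) * gaussSum χ⁻¹ ψ`. So only `U ^ 2` matters, and it is
determined by `p`, `H` and the Jacobi sum `J = jacobiSum χ χ`.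

Now `J = a + 2 * b * μ` with integers `a`, `b`, and comparing `p = a ^ 2 + 4 * b ^ 2` and
`16 * (0,1)₄ = p + 1 - 2 * a - 8 * b` with the hypotheses on `x` and `y` forces `b = y`. Finally, an
integer polynomial that vanishes at a primitive `p`-th root of unity is divisible by
`1 + X + ⋯ + X ^ (p - 1)`, whose value at `4` is `(4 ^ p - 1) / 3`.
-/

open Polynomial in
lemma geom_sum_dvd_aeval {K : Type*} [Field K] [CharZero K] {p : ℕ} (hp : p.Prime) {ζ : K}
    (hζ : IsPrimitiveRoot ζ p) {P : ℤ[X]} (hP : aeval ζ P = 0) {R : Type*} [CommRing R] (ω : R) :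
    ∑ i ∈ range p, ω ^ i ∣ aeval ω P := by
  have : Fact p.Prime := ⟨hp⟩
  have hdvd : cyclotomic p ℤ ∣ P := by
    rw [cyclotomic_eq_minpoly hζ hp.pos]
    exact minpoly.isIntegrallyClosed_dvd (hζ.isIntegral hp.pos) hP
  simpa [cyclotomic_prime] using map_dvd (aeval ω) hdvd

lemma exists_int_add_int_mul_of_mem_adjoin {R : Type*} [CommRing R] {μ : R} (hμ : μ ^ 2 = -1)
    {z : R} (hz : z ∈ Algebra.adjoin ℤ {μ}) : ∃ m n : ℤ, z = m + n * μ := by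
  induction hz using Algebra.adjoin_induction with
  | mem x hx => exact ⟨0, 1, by simpa using hx⟩
  | algebraMap r => exact ⟨r, 0, by simp⟩
  | add x y _ _ hx hy =>
    obtain ⟨a, b, rfl⟩ := hx
    obtain ⟨c, d, rfl⟩ := hy
    exact ⟨a + c, b + d, by push_cast; ring⟩
  | mul x y _ _ hx hy =>
    obtain ⟨a, b, rfl⟩ := hx
    obtain ⟨c, d, rfl⟩ := hy
    refine ⟨a * c - b * d, a * d + b * c, ?_⟩
    push_cast
    linear_combination (b * d : R) * hμ

lemma sq_add_four_mul_sq_unique {p : ℕ} (hp : p.Prime) {x y s t : ℤ}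
    (hxy : (p : ℤ) = x ^ 2 + 4 * y ^ 2) (hst : (p : ℤ) = s ^ 2 + 4 * t ^ 2)
    (h : x - 4 * y = s - 4 * t) : y = t := by
  obtain ⟨d, rfl⟩ : ∃ d, y = t + d := ⟨y - t, by ring⟩
  obtain rfl : x = s + 4 * d := by linarith
  have hfactor : d * (2 * s + 2 * t + 5 * d) = 0 := by linarith
  rcases mul_eq_zero.1 hfactor with hd | hd
  · simp [hd]
  -- Otherwise `5` divides `p`, and `p = 5` leaves room only for `d = 0`.
  obtain ⟨e, rfl⟩ : ∃ e, d = 2 * e := ⟨d / 2, by omega⟩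
  obtain rfl : s = -t - 5 * e := by linarith
  have hp_eq : (p : ℤ) = 5 * ((t + e) ^ 2 + 4 * e ^ 2) := by rw [hst]; ring
  have h5 : 5 ∣ p := by exact_mod_cast Dvd.intro _ hp_eq.symm
  obtain rfl : 5 = p := (Nat.prime_dvd_prime_iff_eq Nat.prime_five hp).1 h5
  have he : e ^ 2 < 1 := by push_cast at hp_eq; nlinarith [sq_nonneg (t + e)]
  rw [sq_lt_one_iff_abs_lt_one, Int.abs_lt_one_iff] at he
  simp [he]

section MulCharSums

variable {K : Type*} [Field K]

lemma sum_inv_pow_mul_mulChar_pow [DecidableEq K] {M : Type*} [CommMonoid M] {n : ℕ} [NeZero n]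
    {χ : MulChar M K} (hχ : χ ^ n = 1) {z : K} (hz : z ^ n = 1) (a : M) :
    ∑ j ∈ range n, z⁻¹ ^ j * (χ ^ j) a = if χ a = z then (n : K) else 0 := by
  have hz0 : z ≠ 0 := (IsUnit.of_pow_eq_one hz (NeZero.ne n)).ne_zero
  by_cases ha : IsUnit a
  · have hterm (j : ℕ) : z⁻¹ ^ j * (χ ^ j) a = (z⁻¹ * χ a) ^ j := by
      rw [← ha.unit_spec, MulChar.pow_apply_coe, mul_pow]
    have hpow : (z⁻¹ * χ a) ^ n = 1 := by
      rw [← hterm, hχ, MulChar.one_apply ha, inv_pow, hz, inv_one, mul_one]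
    simp only [hterm]
    split_ifs with h
    · simp [h, inv_mul_cancel₀ hz0]
    · have hne : z⁻¹ * χ a ≠ 1 := fun h1 ↦ h ((inv_mul_eq_one₀ hz0).1 h1).symm
      rw [geom_sum_eq hne, hpow, sub_self, zero_div]
  · simp [MulChar.map_nonunit _ ha, hz0.symm]

variable [DecidableEq K] {F : Type*} [CommRing F] [Fintype F]

lemma natCast_mul_sum_filter_mulChar_eq {n : ℕ} [NeZero n] {χ : MulChar F K} (hχ : χ ^ n = 1)
    {z : K} (hz : z ^ n = 1) (ψ : AddChar F K) :
    n * ∑ a with χ a = z, ψ a = ∑ j ∈ range n, z⁻¹ ^ j * gaussSum (χ ^ j) ψ := by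
  simp only [gaussSum, mul_sum]
  rw [sum_comm, sum_filter]
  refine sum_congr rfl fun a _ ↦ ?_
  simp only [← mul_assoc, ← sum_mul, sum_inv_pow_mul_mulChar_pow hχ hz, ite_mul, zero_mul]

lemma sq_mul_card_filter_mulChar_eq {n : ℕ} [NeZero n] {χ : MulChar F K} (hχ : χ ^ n = 1)
    {z w : K} (hz : z ^ n = 1) (hw : w ^ n = 1) :
    (n : K) ^ 2 * #{a | χ a = z ∧ χ (a + 1) = w} =
      ∑ j ∈ range n, ∑ k ∈ range n,
        z⁻¹ ^ j * w⁻¹ ^ k * (χ (-1) ^ j * jacobiSum (χ ^ j) (χ ^ k)) := by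
  have hneg (j : ℕ) (b : F) : χ (-1) ^ j * (χ ^ j) b = (χ ^ j) (-b) := by
    rw [neg_eq_neg_one_mul b, map_mul, ← Units.coe_neg_one, MulChar.pow_apply_coe]
  calc (n : K) ^ 2 * #{a | χ a = z ∧ χ (a + 1) = w}
      = ∑ a, (if χ a = z then (n : K) else 0) * (if χ (a + 1) = w then (n : K) else 0) := by
        rw [card_filter, Nat.cast_sum, mul_sum]
        exact sum_congr rfl fun a _ ↦ by split_ifs <;> simp_all [sq]
    _ = ∑ b, (if χ (-b) = z then (n : K) else 0) * (if χ (1 - b) = w then (n : K) else 0) := by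
        rw [← Equiv.sum_comp (Equiv.neg F)]
        simp only [Equiv.neg_apply, neg_add_eq_sub]
    _ = _ := by
        simp only [← sum_inv_pow_mul_mulChar_pow hχ hz, ← sum_inv_pow_mul_mulChar_pow hχ hw,
          jacobiSum, mul_sum]
        rw [sum_comm_cycle]
        refine sum_congr rfl fun b _ ↦ ?_
        rw [← mul_sum, sum_mul_sum]
        refine sum_congr rfl fun j _ ↦ sum_congr rfl fun k _ ↦ ?_
        rw [← hneg]
        ring

end MulCharSums

lemma orderOf_mulChar_apply_of_forall_mem_zpowers {M R : Type*} [CommMonoid M]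
    [CommMonoidWithZero R] {g : Mˣ} (hg : ∀ u, u ∈ Subgroup.zpowers g) (χ : MulChar M R) :
    orderOf (χ g) = orderOf χ := by
  refine orderOf_eq_orderOf_iff.2 fun n ↦ ?_
  rw [MulChar.eq_iff hg, MulChar.pow_apply_coe, MulChar.one_apply_coe]

lemma pow_three_eq_inv {G : Type*} [Group G] {g : G} (hg : g ^ 4 = 1) : g ^ 3 = g⁻¹ :=
  eq_inv_of_mul_eq_one_left (by rw [← pow_succ, hg])

lemma inv_sq_eq_sq {G : Type*} [Group G] {g : G} (hg : g ^ 4 = 1) : g⁻¹ ^ 2 = g ^ 2 := by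
  rw [inv_pow, inv_eq_iff_mul_eq_one, ← pow_add, hg]

lemma sq_eq_neg_one_of_isPrimitiveRoot_four {R : Type*} [CommRing R] [NoZeroDivisors R] {μ : R}
    (hμ : IsPrimitiveRoot μ 4) : μ ^ 2 = -1 :=
  (hμ.pow four_pos (by norm_num : 4 = 2 * 2)).eq_neg_one_of_two_right

lemma gaussSum_mul_gaussSum_inv {F R : Type*} [Field F] [Fintype F] [CommRing R] [IsDomain R]
    {χ : MulChar F R} (hχ : χ ≠ 1) {ψ : AddChar F R} (hψ : ψ.IsPrimitive) :
    gaussSum χ ψ * gaussSum χ⁻¹ ψ = χ (-1) * Fintype.card F := by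
  have hinv : χ ^ (orderOf χ - 1) = χ⁻¹ := by
    rw [eq_inv_iff_mul_eq_one, ← pow_succ, Nat.sub_add_cancel χ.orderOf_pos, pow_orderOf_eq_one]
  rw [← hinv, gaussSum_mul_gaussSum_pow_orderOf_sub_one hχ hψ]

lemma mulChar_sq_neg_one {M R : Type*} [CommRing M] [CommRing R] (χ : MulChar M R) :
    (χ ^ 2) (-1) = 1 := by
  rw [MulChar.pow_apply' _ two_ne_zero, ← map_pow, neg_one_sq, map_one]

section QuarticCharacter

variable {F : Type*} [Field F] [Fintype F]

section Domain

variable {R : Type*} [CommRing R] [IsDomain R] {χ : MulChar F R}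

lemma gaussSum_sq_sq_of_orderOf_eq_four (hχ : orderOf χ = 4) {ψ : AddChar F R}
    (hψ : ψ.IsPrimitive) : gaussSum (χ ^ 2) ψ ^ 2 = Fintype.card F := by
  have hquad : (χ ^ 2).IsQuadratic := by
    rw [MulChar.isQuadratic_iff_sq_eq_one, ← pow_mul]
    exact orderOf_dvd_iff_pow_eq_one.1 hχ.dvd
  have hne : χ ^ 2 ≠ 1 := pow_ne_one_of_lt_orderOf two_ne_zero (by omega)
  rw [gaussSum_sq hne hquad hψ, mulChar_sq_neg_one, one_mul]

lemma gaussSum_sq_mul_jacobiSum_self (hχ : orderOf χ = 4) (ψ : AddChar F R) :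
    gaussSum (χ ^ 2) ψ * jacobiSum χ χ = gaussSum χ ψ ^ 2 := by
  have h2 : χ * χ ≠ 1 := sq χ ▸ pow_ne_one_of_lt_orderOf two_ne_zero (by omega)
  rw [sq χ, jacobiSum_mul_nontrivial h2, sq]

lemma gaussSum_add_gaussSum_inv_sq (hχ : orderOf χ = 4) (hneg : χ (-1) = -1) {μ : R}
    (hμ : μ ^ 2 = -1) {ψ : AddChar F R} (hψ : ψ.IsPrimitive) :
    ((1 + μ) * gaussSum χ ψ + (1 - μ) * gaussSum χ⁻¹ ψ) ^ 2 =
      2 * μ * gaussSum (χ ^ 2) ψ * (jacobiSum χ χ - jacobiSum χ⁻¹ χ⁻¹) - 4 * Fintype.card F := by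
  have hinv := gaussSum_mul_gaussSum_inv (χ := χ) (by rintro rfl; simp at hχ) hψ
  have hJ := gaussSum_sq_mul_jacobiSum_self hχ ψ
  have hJ' := gaussSum_sq_mul_jacobiSum_self ((orderOf_inv χ).trans hχ) ψ
  rw [inv_sq_eq_sq (hχ ▸ pow_orderOf_eq_one χ)] at hJ'
  rw [hneg] at hinv
  linear_combination 4 * hinv - 2 * μ * (hJ - hJ')
    + (gaussSum χ ψ - gaussSum χ⁻¹ ψ) ^ 2 * hμ

lemma jacobiSum_sq_right_of_isPrimitive (hχ : orderOf χ = 4) {ψ : AddChar F R}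
    (hψ : ψ.IsPrimitive) (hF : (Fintype.card F : R) ≠ 0) :
    jacobiSum χ (χ ^ 2) = χ (-1) * jacobiSum χ χ := by
  have h1 : χ ≠ 1 := by rintro rfl; simp at hχ
  have h3 : χ * χ ^ 2 ≠ 1 :=
    pow_succ' χ 2 ▸ pow_ne_one_of_lt_orderOf three_ne_zero (by omega)
  have hJ₁ := gaussSum_sq_mul_jacobiSum_self hχ ψ
  have hJ₂ := jacobiSum_mul_nontrivial h3 ψ
  have hinv := gaussSum_mul_gaussSum_inv h1 hψ
  have hsq := gaussSum_sq_sq_of_orderOf_eq_four hχ hψ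
  have hneg : χ (-1) ^ 2 = 1 := by
    rw [← MulChar.pow_apply' _ two_ne_zero, mulChar_sq_neg_one]
  rw [← pow_succ', pow_three_eq_inv (hχ ▸ pow_orderOf_eq_one χ)] at hJ₂
  apply mul_left_cancel₀ hF
  linear_combination -(Fintype.card F) * jacobiSum χ (χ ^ 2) * hneg
    - χ (-1) * jacobiSum χ (χ ^ 2) * hinv + χ (-1) * gaussSum χ ψ * hJ₂
    - χ (-1) * gaussSum (χ ^ 2) ψ * hJ₁ + χ (-1) * jacobiSum χ χ * hsq

end Domain

section Field

variable {K : Type*} [Field K] {χ : MulChar F K}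

lemma jacobiSum_sq_right_of_orderOf_eq_four (h : ringChar K ≠ ringChar F) (hχ : orderOf χ = 4) :
    jacobiSum χ (χ ^ 2) = χ (-1) * jacobiSum χ χ := by
  -- `K` may lack the roots of unity that Gauss sums need, so adjoin them.
  let ψ := AddChar.FiniteField.primitiveChar F K h
  let f := algebraMap K (CyclotomicField ψ.n K)
  have hF : (Fintype.card F : CyclotomicField ψ.n K) ≠ 0 := by
    obtain ⟨n, hp, hc⟩ := FiniteField.card F (ringChar F)
    intro H
    rw [hc, Nat.cast_pow] at H
    exact h ((Algebra.ringChar_eq K _).trans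
      (CharP.ringChar_of_prime_eq_zero hp ((pow_eq_zero_iff n.ne_zero).1 H)))
  have hχ' : orderOf (χ.ringHomComp f) = 4 :=
    (orderOf_injective (MulChar.ringHomCompHom f)
      (MulChar.injective_ringHomComp f.injective) χ).trans hχ
  apply f.injective
  rw [map_mul, ← jacobiSum_ringHomComp, ← jacobiSum_ringHomComp, ← MulChar.ringHomComp_pow]
  exact jacobiSum_sq_right_of_isPrimitive hχ' ψ.prim hF

variable [DecidableEq K]

/-- The Gaussian period of `ψ` over the coset of `ker χ` on which `χ` takes the value `z`. -/
def mulCharPeriod (χ : MulChar F K) (ψ : AddChar F K) (z : K) : K := ∑ a with χ a = z, ψ a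

lemma four_mul_mulCharPeriod (hχ : orderOf χ = 4) {z : K} (hz : z ^ 4 = 1) {ψ : AddChar F K}
    (hψ : ψ.IsPrimitive) :
    4 * mulCharPeriod χ ψ z =
      -1 + z ^ 3 * gaussSum χ ψ + z ^ 2 * gaussSum (χ ^ 2) ψ + z * gaussSum χ⁻¹ ψ := by
  have h4 : χ ^ 4 = 1 := hχ ▸ pow_orderOf_eq_one χ
  have hψ1 : ψ ≠ 1 := by
    rintro rfl
    simpa using hψ one_ne_zero
  have hzinv : z⁻¹ = z ^ 3 := inv_eq_of_mul_eq_one_right (by rw [← pow_succ', hz])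
  have hexp := natCast_mul_sum_filter_mulChar_eq h4 hz ψ
  simp only [sum_range_succ, sum_range_zero, zero_add, pow_zero, pow_one, one_mul, hzinv,
    gaussSum_one_left hψ1, pow_three_eq_inv h4] at hexp
  rw [mulCharPeriod]
  push_cast at hexp
  linear_combination hexp + (z ^ 2 * gaussSum (χ ^ 2) ψ + (z + z ^ 5) * gaussSum χ⁻¹ ψ) * hz

variable {μ : K}

lemma mulCharPeriod_mul_eq (hχ : orderOf χ = 4) (hneg : χ (-1) = -1) (hμ : IsPrimitiveRoot μ 4)
    {ψ : AddChar F K} (hψ : ψ.IsPrimitive) :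
    4 * (mulCharPeriod χ ψ (μ ^ 3) + 2 * mulCharPeriod χ ψ (μ ^ 2) + 3 * mulCharPeriod χ ψ (μ ^ 1))
        * (mulCharPeriod χ ψ (μ ^ 1) + 2 * mulCharPeriod χ ψ (μ ^ 0)
          + 3 * mulCharPeriod χ ψ (μ ^ 3)) =
      (6 - 2 * μ * (jacobiSum χ χ - jacobiSum χ⁻¹ χ⁻¹))
          * (mulCharPeriod χ ψ (μ ^ 0) + mulCharPeriod χ ψ (μ ^ 2) - mulCharPeriod χ ψ (μ ^ 1)
            - mulCharPeriod χ ψ (μ ^ 3))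
        + 5 * Fintype.card F + 9 := by
  have h4 : (4 : K) ≠ 0 := by exact_mod_cast hμ.neZero'.out
  have hμ2 := sq_eq_neg_one_of_isPrimitiveRoot_four hμ
  have hη (i : ℕ) := four_mul_mulCharPeriod hχ (z := μ ^ i)
    (by rw [pow_right_comm, hμ.pow_eq_one, one_pow]) hψ
  generalize mulCharPeriod χ ψ = η at hη ⊢
  have hsq := gaussSum_sq_sq_of_orderOf_eq_four hχ hψ
  have hU := gaussSum_add_gaussSum_inv_sq hχ hneg hμ2 hψ
  set g₁ := gaussSum χ ψ
  set g₂ := gaussSum (χ ^ 2) ψ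
  set g₃ := gaussSum χ⁻¹ ψ
  set U := (1 + μ) * g₁ + (1 - μ) * g₃
  have h0 : 4 * η (μ ^ 0) = -1 + g₁ + g₂ + g₃ := by linear_combination hη 0
  have h1 : 4 * η (μ ^ 1) = -1 - μ * g₁ - g₂ + μ * g₃ := by
    linear_combination hη 1 + (μ * g₁ + g₂) * hμ2
  have h2 : 4 * η (μ ^ 2) = -1 - g₁ + g₂ - g₃ := by
    linear_combination hη 2 + ((μ ^ 4 - μ ^ 2 + 1) * g₁ + (μ ^ 2 - 1) * g₂ + g₃) * hμ2
  have h3 : 4 * η (μ ^ 3) = -1 + μ * g₁ - g₂ - μ * g₃ := by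
    linear_combination hη 3 +
      ((μ ^ 7 - μ ^ 5 + μ ^ 3 - μ) * g₁ + (μ ^ 4 - μ ^ 2 + 1) * g₂ + μ * g₃) * hμ2
  have hH : η (μ ^ 0) + η (μ ^ 2) - η (μ ^ 1) - η (μ ^ 3) = g₂ :=
    mul_left_cancel₀ h4 (by linear_combination h0 + h2 - h1 - h3)
  have hA : 4 * (η (μ ^ 3) + 2 * η (μ ^ 2) + 3 * η (μ ^ 1)) = -2 * (3 + g₂ + U) := by
    linear_combination h3 + 2 * h2 + 3 * h1
  have hB : 4 * (η (μ ^ 1) + 2 * η (μ ^ 0) + 3 * η (μ ^ 3)) = -2 * (3 + g₂ - U) := by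
    linear_combination h1 + 2 * h0 + 3 * h3
  rw [hH]
  apply mul_left_cancel₀ h4
  linear_combination 4 * (η (μ ^ 1) + 2 * η (μ ^ 0) + 3 * η (μ ^ 3)) * hA
    - 2 * (3 + g₂ + U) * hB - 4 * hU + 4 * hsq

lemma sixteen_mul_card_filter_mulChar (h : ringChar K ≠ ringChar F) (hχ : orderOf χ = 4)
    (hneg : χ (-1) = -1) (hμ : μ ^ 2 = -1) :
    16 * (#{a | χ a = 1 ∧ χ (a + 1) = μ} : K) =
      Fintype.card F + 1 - (jacobiSum χ χ + jacobiSum χ⁻¹ χ⁻¹)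
        + 2 * μ * (jacobiSum χ χ - jacobiSum χ⁻¹ χ⁻¹) := by
  have h4 : χ ^ 4 = 1 := hχ ▸ pow_orderOf_eq_one χ
  have h1 : χ ≠ 1 := by rintro rfl; simp at hχ
  have h2 : χ ^ 2 ≠ 1 := pow_ne_one_of_lt_orderOf two_ne_zero (by omega)
  have hχ' : orderOf χ⁻¹ = 4 := (orderOf_inv χ).trans hχ
  have hneg' : χ⁻¹ (-1) = -1 := by rw [MulChar.inv_apply', inv_neg_one, hneg]
  have hJ22 : jacobiSum (χ ^ 2) (χ ^ 2) = -1 := by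
    have := jacobiSum_nontrivial_inv h2
    rwa [← inv_pow, inv_sq_eq_sq h4, mulChar_sq_neg_one] at this
  have hJ12 := jacobiSum_sq_right_of_orderOf_eq_four h hχ
  have hJ32 := jacobiSum_sq_right_of_orderOf_eq_four h hχ'
  have hJ13 := jacobiSum_nontrivial_inv h1
  rw [inv_sq_eq_sq h4] at hJ32
  have hμinv : μ⁻¹ = -μ := inv_eq_of_mul_eq_one_right (by linear_combination -hμ)
  have hexp := sq_mul_card_filter_mulChar_eq h4 (one_pow 4) (w := μ)
    (by linear_combination (μ ^ 2 - 1) * hμ)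
  simp only [sum_range_succ, sum_range_zero, zero_add, pow_zero, pow_one, one_mul, inv_one,
    one_pow, hμinv, hneg, hneg', pow_three_eq_inv h4, jacobiSum_one_one, jacobiSum_comm _ 1,
    jacobiSum_one_nontrivial h1, jacobiSum_one_nontrivial h2,
    jacobiSum_one_nontrivial (inv_ne_one.2 h1), jacobiSum_comm (χ ^ 2), jacobiSum_comm χ⁻¹ χ,
    hJ22, hJ12, hJ32, hJ13] at hexp
  push_cast at hexp
  linear_combination hexp
    + (-2 + 2 * μ + 2 * μ * jacobiSum χ⁻¹ χ⁻¹ + jacobiSum χ χ + jacobiSum χ⁻¹ χ⁻¹) * hμ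

end Field

end QuarticCharacter

lemma exists_jacobiSum_self_eq {F : Type*} [Field F] [Fintype F] {χ : MulChar F ℂ}
    (hχ : orderOf χ = 4) {μ : ℂ} (hμ : IsPrimitiveRoot μ 4) :
    ∃ a b : ℤ, jacobiSum χ χ = a + 2 * b * μ ∧ jacobiSum χ⁻¹ χ⁻¹ = a - 2 * b * μ ∧
      (Fintype.card F : ℤ) = a ^ 2 + 4 * b ^ 2 := by
  have hμ2 := sq_eq_neg_one_of_isPrimitiveRoot_four hμ
  have h4 : χ ^ 4 = 1 := hχ ▸ pow_orderOf_eq_one χ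
  obtain ⟨z, hz, hJ⟩ := exists_jacobiSum_eq_neg_one_add (n := 4) (by norm_num) h4 h4
    (hχ ▸ χ.orderOf_dvd_card_sub_one) hμ
  obtain ⟨m, n, rfl⟩ := exists_int_add_int_mul_of_mem_adjoin hμ2 hz
  have hJ1 : jacobiSum χ χ = (2 * n - 1 : ℤ) + 2 * (-m : ℤ) * μ := by
    rw [hJ]
    push_cast
    linear_combination (m + n * μ - 2 * n) * hμ2
  have hstar : star μ = -μ := calc
    star μ = μ⁻¹ := (Complex.inv_eq_conj (hμ.norm'_eq_one four_ne_zero)).symm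
    _ = -μ := inv_eq_of_mul_eq_one_right (by linear_combination -hμ2)
  have hJ2 : jacobiSum χ⁻¹ χ⁻¹ = (2 * n - 1 : ℤ) - 2 * (-m : ℤ) * μ := by
    have : jacobiSum χ⁻¹ χ⁻¹ = star (jacobiSum χ χ) := by
      simp only [jacobiSum, star_sum, star_mul', MulChar.star_apply']
    rw [this, hJ1]
    simp [hstar]
  refine ⟨2 * n - 1, -m, hJ1, hJ2, ?_⟩
  have h1 : χ ≠ 1 := by rintro rfl; simp at hχ
  have h2 : χ * χ ≠ 1 := sq χ ▸ pow_ne_one_of_lt_orderOf two_ne_zero (by omega)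
  have hnorm := jacobiSum_mul_jacobiSum_inv
    (by simpa only [ringChar.eq_zero] using (CharP.ringChar_ne_zero_of_finite F).symm) h1 h1 h2
  rw [hJ1, hJ2] at hnorm
  have : (Fintype.card F : ℂ) = ((2 * n - 1) ^ 2 + 4 * (-m) ^ 2 : ℤ) := by
    push_cast at hnorm ⊢
    linear_combination -hnorm - 4 * m ^ 2 * hμ2
  exact_mod_cast this

section FiniteField

variable {F : Type*} [Field F] [Fintype F] {R : Type*} [CommRing R]

lemma isPrimitiveRoot_mulChar_apply {g : F} (hg : IsPrimitiveRoot g (Fintype.card F - 1))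
    (χ : MulChar F R) : IsPrimitiveRoot (χ g) (orderOf χ) := by
  have hcard : Fintype.card F - 1 ≠ 0 := (Nat.sub_pos_of_lt Fintype.one_lt_card).ne'
  obtain ⟨u, rfl⟩ := hg.isUnit hcard
  have hu : Subgroup.zpowers u = ⊤ := Subgroup.eq_top_of_card_eq _ (by
    rw [Nat.card_zpowers, ← (IsPrimitiveRoot.coe_units_iff.1 hg).eq_orderOf, Nat.card_units,
      Nat.card_eq_fintype_card])
  rw [← orderOf_mulChar_apply_of_forall_mem_zpowers (fun v ↦ hu ▸ Subgroup.mem_top v) χ]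
  exact IsPrimitiveRoot.orderOf _

lemma mulChar_neg_one_of_orderOf_eq_four [IsDomain R] {χ : MulChar F R} (hχ : orderOf χ = 4) {g : F}
    (hg : IsPrimitiveRoot g (Fintype.card F - 1)) (hF : Fintype.card F % 8 = 5) :
    χ (-1) = -1 := by
  have hμ : IsPrimitiveRoot (χ g) 4 := hχ ▸ isPrimitiveRoot_mulChar_apply hg χ
  obtain ⟨k, hk⟩ : ∃ k, Fintype.card F - 1 = (4 * k + 2) * 2 := ⟨Fintype.card F / 8, by omega⟩
  have hg' : g ^ (4 * k + 2) = -1 := (hg.pow (by omega) hk).eq_neg_one_of_two_right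
  rw [← hg', map_pow, pow_add, pow_mul, hμ.pow_eq_one, one_pow, one_mul,
    sq_eq_neg_one_of_isPrimitiveRoot_four hμ]

end FiniteField

/-- The Gaussian period over the cyclotomic class `D_i`, with an element `ω` of any semiring in
place of a `p`-th root of unity; thus `η_i = cycPeriod p θ 4 i`. -/
def cycPeriod {R : Type*} [Semiring R] (p θ : ℕ) (ω : R) (i : ℕ) : R := ∑ t ∈ cycD p θ i, ω ^ t

open Polynomial in
lemma aeval_cycPeriod_X {R : Type*} [CommRing R] (p θ : ℕ) (ω : R) (i : ℕ) :
    aeval ω (cycPeriod p θ (X : ℤ[X]) i) = cycPeriod p θ ω i := by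
  simp only [cycPeriod, map_sum, map_pow, aeval_X]

section CyclotomicClass

variable {p : ℕ} [Fact p.Prime] {θ : ℕ} {K : Type*} [Field K] [DecidableEq K]
  {χ : MulChar (ZMod p) K}

lemma cycD_eq_image_val (hθ : IsPrimitiveRoot (θ : ZMod p) (p - 1))
    (hμ : IsPrimitiveRoot (χ θ) 4) {i : ℕ} (hi : i < 4) :
    cycD p θ i = image ZMod.val {a : ZMod p | χ a = χ θ ^ i} := by
  have hp : NeZero (p - 1) := ⟨(Nat.sub_pos_of_lt (Fact.out : p.Prime).one_lt).ne'⟩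
  have h4 : 4 ∣ p - 1 := hμ.dvd_of_pow_eq_one _ (by rw [← map_pow, hθ.pow_eq_one, map_one])
  ext t
  simp only [cycD, mem_image, mem_range, mem_filter, mem_univ, true_and]
  constructor
  · rintro ⟨j, -, rfl⟩
    refine ⟨(θ ^ (i + 4 * j) : ℕ), ?_, ZMod.val_natCast _ _⟩
    rw [Nat.cast_pow, map_pow, pow_add, pow_mul, hμ.pow_eq_one, one_pow, mul_one]
  · rintro ⟨a, ha, rfl⟩
    have ha0 : a ≠ 0 := by
      rintro rfl
      rw [MulChar.map_zero] at ha
      exact pow_ne_zero i (hμ.ne_zero four_ne_zero) ha.symm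
    obtain ⟨k, hk, rfl⟩ := hθ.eq_pow_of_pow_eq_one (ZMod.pow_card_sub_one_eq_one ha0)
    have hki : k % 4 = i := hμ.pow_inj (Nat.mod_lt k four_pos) hi
      (by rw [← ha, map_pow, hμ.eq_orderOf, pow_mod_orderOf])
    exact ⟨k / 4, by omega, by rw [← hki, Nat.mod_add_div, ← ZMod.val_natCast, Nat.cast_pow]⟩

lemma cycPeriod_eq_mulCharPeriod (hθ : IsPrimitiveRoot (θ : ZMod p) (p - 1))
    (hμ : IsPrimitiveRoot (χ θ) 4) {ζ : K} (hζ : ζ ^ p = 1) {i : ℕ} (hi : i < 4) :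
    cycPeriod p θ ζ i = mulCharPeriod χ (AddChar.zmodChar p hζ) (χ θ ^ i) := by
  rw [cycPeriod, cycD_eq_image_val hθ hμ hi, sum_image (ZMod.val_injective p).injOn, mulCharPeriod]
  simp only [AddChar.zmodChar_apply]

lemma card_filter_cycD_eq (hθ : IsPrimitiveRoot (θ : ZMod p) (p - 1))
    (hμ : IsPrimitiveRoot (χ θ) 4) :
    #{a ∈ cycD p θ 0 | (a + 1) % p ∈ cycD p θ 1} =
      #{a : ZMod p | χ a = 1 ∧ χ (a + 1) = χ θ} := by
  rw [cycD_eq_image_val hθ hμ four_pos, cycD_eq_image_val hθ hμ (by norm_num : 1 < 4),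
    filter_image, card_image_of_injective _ (ZMod.val_injective p), filter_filter]
  have hsucc (a : ZMod p) : (a.val + 1) % p = (a + 1).val := by
    rw [ZMod.val_add, ZMod.val_one]
  simp only [hsucc, (ZMod.val_injective p).mem_finset_image, mem_filter, mem_univ, true_and,
    pow_zero, pow_one]

end CyclotomicClass

lemma jacobiSum_self_sub_jacobiSum_inv_self {p : ℕ} [hp : Fact p.Prime] {x y : ℤ}
    (hxy : (p : ℤ) = x ^ 2 + 4 * y ^ 2) {θ : ℕ} (hθ : IsPrimitiveRoot (θ : ZMod p) (p - 1))
    (hy : 16 * (#{a ∈ cycD p θ 0 | (a + 1) % p ∈ cycD p θ 1} : ℤ) = p + 1 + 2 * x - 8 * y)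
    {χ : MulChar (ZMod p) ℂ} (hχ : orderOf χ = 4) (hneg : χ (-1) = -1)
    (hμ : IsPrimitiveRoot (χ θ) 4) :
    jacobiSum χ χ - jacobiSum χ⁻¹ χ⁻¹ = 4 * y * χ θ := by
  have hμ2 := sq_eq_neg_one_of_isPrimitiveRoot_four hμ
  obtain ⟨a, b, hJ, hJ', hab⟩ := exists_jacobiSum_self_eq hχ hμ
  rw [ZMod.card] at hab
  have hcard : 16 * (#{a ∈ cycD p θ 0 | (a + 1) % p ∈ cycD p θ 1} : ℤ) =
      p + 1 - 2 * a - 8 * b := by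
    have h := sixteen_mul_card_filter_mulChar
      (by simpa only [ringChar.eq_zero] using (CharP.ringChar_ne_zero_of_finite _).symm) hχ hneg hμ2
    rw [← card_filter_cycD_eq hθ hμ, hJ, hJ', ZMod.card] at h
    have : (16 * #{a ∈ cycD p θ 0 | (a + 1) % p ∈ cycD p θ 1} : ℂ) = p + 1 - 2 * a - 8 * b := by
      linear_combination h + 8 * b * hμ2
    exact_mod_cast this
  obtain rfl : y = b := sq_add_four_mul_sq_unique hp.out hxy
    (by rw [hab, neg_sq] : (p : ℤ) = (-a) ^ 2 + 4 * b ^ 2) (by linarith)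
  rw [hJ, hJ']
  ring

lemma cycPeriod_mul_eq_of_isPrimitiveRoot {p : ℕ} (hp : p.Prime) (hp8 : p % 8 = 5) {x y : ℤ}
    (hxy : (p : ℤ) = x ^ 2 + 4 * y ^ 2) {θ : ℕ} (hθ : IsPrimitiveRoot (θ : ZMod p) (p - 1))
    (hy : 16 * (#{a ∈ cycD p θ 0 | (a + 1) % p ∈ cycD p θ 1} : ℤ) = p + 1 + 2 * x - 8 * y)
    {ζ : ℂ} (hζ : IsPrimitiveRoot ζ p) :
    4 * (cycPeriod p θ ζ 3 + 2 * cycPeriod p θ ζ 2 + 3 * cycPeriod p θ ζ 1)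
        * (cycPeriod p θ ζ 1 + 2 * cycPeriod p θ ζ 0 + 3 * cycPeriod p θ ζ 3) =
      2 * (3 + 4 * y) * (cycPeriod p θ ζ 0 + cycPeriod p θ ζ 2 - cycPeriod p θ ζ 1
        - cycPeriod p θ ζ 3) + 5 * p + 9 := by
  have : Fact p.Prime := ⟨hp⟩
  have hcard : Fintype.card (ZMod p) = p := ZMod.card p
  obtain ⟨χ, hχ⟩ : ∃ χ : MulChar (ZMod p) ℂ, orderOf χ = 4 :=
    MulChar.exists_mulChar_orderOf _ (by omega) Complex.isPrimitiveRoot_I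
  have hθ' : IsPrimitiveRoot (θ : ZMod p) (Fintype.card (ZMod p) - 1) := by rwa [hcard]
  have hμ : IsPrimitiveRoot (χ θ) 4 := hχ ▸ isPrimitiveRoot_mulChar_apply hθ' χ
  have hneg := mulChar_neg_one_of_orderOf_eq_four hχ hθ' (by omega)
  have hperiod {i : ℕ} (hi : i < 4) := cycPeriod_eq_mulCharPeriod hθ hμ hζ.pow_eq_one hi
  rw [hperiod (by norm_num : 0 < 4), hperiod (by norm_num : 1 < 4), hperiod (by norm_num : 2 < 4),
    hperiod (by norm_num : 3 < 4), mulCharPeriod_mul_eq hχ hneg hμ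
      (AddChar.zmodChar_primitive_of_primitive_root p hζ),
    jacobiSum_self_sub_jacobiSum_inv_self hxy hθ hy hχ hneg hμ, hcard]
  generalize mulCharPeriod χ _ = η
  linear_combination -8 * y * (η (χ θ ^ 0) + η (χ θ ^ 2) - η (χ θ ^ 1) - η (χ θ ^ 3)) *
    sq_eq_neg_one_of_isPrimitiveRoot_four hμ

open Polynomial in
theorem lemma5_part5_general {p : ℕ} (hp : p.Prime) (hp8 : p % 8 = 5) {x y : ℤ}
    (hxy : (p : ℤ) = x ^ 2 + 4 * y ^ 2) {θ : ℕ} (hθ : IsPrimitiveRoot (θ : ZMod p) (p - 1))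
    (hy : 16 * (#{a ∈ cycD p θ 0 | (a + 1) % p ∈ cycD p θ 1} : ℤ) = p + 1 + 2 * x - 8 * y)
    {R : Type*} [CommRing R] (ω : R) :
    ∑ i ∈ range p, ω ^ i ∣
      2 * (3 + 4 * (y : R)) * (cycPeriod p θ ω 0 + cycPeriod p θ ω 2 - cycPeriod p θ ω 1
          - cycPeriod p θ ω 3) + 5 * (p : R) + 9
        - 4 * (cycPeriod p θ ω 3 + 2 * cycPeriod p θ ω 2 + 3 * cycPeriod p θ ω 1)
          * (cycPeriod p θ ω 1 + 2 * cycPeriod p θ ω 0 + 3 * cycPeriod p θ ω 3) := by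
  let η := cycPeriod p θ (X : ℤ[X])
  let P : ℤ[X] := 2 * (3 + 4 * (y : ℤ[X])) * (η 0 + η 2 - η 1 - η 3) + 5 * (p : ℤ[X]) + 9
    - 4 * (η 3 + 2 * η 2 + 3 * η 1) * (η 1 + 2 * η 0 + 3 * η 3)
  have hζ := Complex.isPrimitiveRoot_exp p hp.ne_zero
  have hP : aeval (Complex.exp (2 * Real.pi * Complex.I / p)) P = 0 := by
    simp only [P, η, map_sub, map_add, map_mul, map_ofNat, map_natCast, map_intCast,
      aeval_cycPeriod_X]
    rw [cycPeriod_mul_eq_of_isPrimitiveRoot hp hp8 hxy hθ hy hζ, sub_self]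
  simpa only [P, η, map_sub, map_add, map_mul, map_ofNat, map_natCast, map_intCast,
    aeval_cycPeriod_X] using geom_sum_dvd_aeval hp hζ hP ω

theorem lemma5_part5
    (p : ℕ) (hp : p.Prime) (hp8 : p % 8 = 5)
    (x y : ℤ) (hx : x % 4 = 1) (hxy : (p : ℤ) = x ^ 2 + 4 * y ^ 2)
    (θ : ℕ) (hθ : IsPrimitiveRoot (θ : ZMod p) (p - 1))
    (hy : 16 * (((cycD p θ 0).filter (fun a => (a + 1) % p ∈ cycD p θ 1)).card : ℤ)
        = (p : ℤ) + 1 + 2 * x - 8 * y)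
    :
    4 * (eta4 p θ 3 + 2 * eta4 p θ 2 + 3 * eta4 p θ 1) * (eta4 p θ 1 + 2 * eta4 p θ 0 + 3 * eta4 p θ 3)
      ≡ 2 * (3 + 4 * y) * Hval p θ + 5 * (p : ℤ) + 9 [ZMOD ((4 : ℤ) ^ p - 1) / 3] := by
  have hmod : ((4 : ℤ) ^ p - 1) / 3 = ∑ i ∈ range p, 4 ^ i := by
    rw [← geom_sum_mul]
    norm_num
  rw [hmod, Int.modEq_iff_dvd]
  exact lemma5_part5_general hp hp8 hxy hθ hy (4 : ℤ)
end
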